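/- Let F₂ be the free group on two generators g₁, g₂. For every element w ∈ F₂ there exists a polynomial P ∈ ℤ[X, Y, Z] with integer coefficients, depending only on w, such that for every pair of matrices A, B ∈ SL₂(ℂ), if ρ: F₂ → SL₂(ℂ) is the homomorphism with ρ(g₁) = A and ρ(g₂) = B, then tr(ρ(w)) = P(tr A, tr B, tr(A·B)). -/

import Mathlib

open Matrix MatrixGroups

/-!
For `A, B ∈ SL(2, R)`, the Cayley–Hamilton theorem and its polarization show that the span of
`1, A, B, AB` over the subring generated by `tr A, tr B, tr (AB)` is stable under right
multiplication by `A`, `B` and their inverses. Hence it contains every `ρ(w)`, whose trace is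
therefore an integer polynomial in the three traces. Running this argument once for the universal
representation, of which every other representation is a specialization, gives a polynomial that
depends only on the word.
-/

section FinTwo

variable {R : Type*} [CommRing R]

theorem adjugate_fin_two_eq_trace_smul_one_sub (M : Matrix (Fin 2) (Fin 2) R) :
    M.adjugate = M.trace • 1 - M := by
  rw [adjugate_fin_two]
  ext i j
  fin_cases i <;> fin_cases j <;> simp [trace_fin_two]

theorem mul_self_fin_two (M : Matrix (Fin 2) (Fin 2) R) :
    M * M = M.trace • M - M.det • 1 := by
  rw [← mul_adjugate, adjugate_fin_two_eq_trace_smul_one_sub, mul_sub, mul_smul_comm, mul_one,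
    sub_sub_cancel]

theorem mul_add_mul_swap_fin_two (M N : Matrix (Fin 2) (Fin 2) R) :
    M * N + N * M =
      M.trace • N + N.trace • M + ((M * N).trace - M.trace * N.trace) • 1 := by
  ext i j
  fin_cases i <;> fin_cases j <;> simp [mul_apply, trace_fin_two] <;> ring

theorem mul_mul_same_fin_two (M N : Matrix (Fin 2) (Fin 2) R) :
    M * N * M = (M * N).trace • M - M.det • N.adjugate := by
  ext i j
  fin_cases i <;> fin_cases j <;>
    simp [mul_apply, trace_fin_two, det_fin_two, adjugate_fin_two] <;> ring

end FinTwo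

section TraceRing

variable {R : Type*} [CommRing R]

/-- Evaluation of a polynomial in `ℤ[X, Y, Z]` at the traces of `A`, `B` and `AB`. -/
noncomputable def traceEval (A B : Matrix (Fin 2) (Fin 2) R) : MvPolynomial (Fin 3) ℤ →ₐ[ℤ] R :=
  MvPolynomial.aeval ![A.trace, B.trace, (A * B).trace]

/-- The ring `ℤ[tr A, tr B, tr (AB)]`, as an image so that its elements are polynomials in the
three traces by definition. -/
noncomputable def traceRing (A B : Matrix (Fin 2) (Fin 2) R) : Subalgebra ℤ R :=
  (traceEval A B).range

/-- The span of `1, A, B, AB` over the trace ring of the pair `A, B`. -/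
noncomputable def traceSpan (A B : Matrix (Fin 2) (Fin 2) R) :
    Submodule (traceRing A B) (Matrix (Fin 2) (Fin 2) R) :=
  Submodule.span (traceRing A B) {1, A, B, A * B}

variable {A B M N : Matrix (Fin 2) (Fin 2) R}

theorem map_traceEval {S : Type*} [CommRing S] (φ : R →+* S) (P : MvPolynomial (Fin 3) ℤ) :
    φ (traceEval A B P) = traceEval (φ.mapMatrix A) (φ.mapMatrix B) P := by
  have map_trace (C : Matrix (Fin 2) (Fin 2) R) : φ C.trace = (φ.mapMatrix C).trace :=
    AddMonoidHom.map_trace φ C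
  have map_traces : (fun i => φ (![A.trace, B.trace, (A * B).trace] i)) =
      ![(φ.mapMatrix A).trace, (φ.mapMatrix B).trace,
        (φ.mapMatrix A * φ.mapMatrix B).trace] := by
    rw [← map_mul, ← map_trace, ← map_trace, ← map_trace]
    ext i
    fin_cases i <;> rfl
  rw [traceEval, traceEval, ← map_traces]
  exact MvPolynomial.comp_aeval_apply _ φ.toIntAlgHom P

theorem trace_left_mem_traceRing : A.trace ∈ traceRing A B :=
  ⟨MvPolynomial.X 0, by simp [traceEval]⟩

theorem trace_right_mem_traceRing : B.trace ∈ traceRing A B :=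
  ⟨MvPolynomial.X 1, by simp [traceEval]⟩

theorem trace_mul_mem_traceRing : (A * B).trace ∈ traceRing A B :=
  ⟨MvPolynomial.X 2, by simp [traceEval]⟩

theorem smul_mem_traceSpan {c : R} (hc : c ∈ traceRing A B) (hM : M ∈ traceSpan A B) :
    c • M ∈ traceSpan A B :=
  (traceSpan A B).smul_mem ⟨c, hc⟩ hM

theorem one_mem_traceSpan : 1 ∈ traceSpan A B :=
  Submodule.subset_span (by simp)

theorem left_mem_traceSpan : A ∈ traceSpan A B :=
  Submodule.subset_span (by simp)

theorem right_mem_traceSpan : B ∈ traceSpan A B :=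
  Submodule.subset_span (by simp)

theorem left_mul_right_mem_traceSpan : A * B ∈ traceSpan A B :=
  Submodule.subset_span (by simp)

theorem right_mul_left_mem_traceSpan : B * A ∈ traceSpan A B := by
  have h_coeff : (A * B).trace - A.trace * B.trace ∈ traceRing A B :=
    sub_mem trace_mul_mem_traceRing (mul_mem trace_left_mem_traceRing trace_right_mem_traceRing)
  rw [eq_sub_of_add_eq' (mul_add_mul_swap_fin_two A B)]
  refine sub_mem (add_mem (add_mem ?_ ?_) ?_) left_mul_right_mem_traceSpan
  · exact smul_mem_traceSpan trace_left_mem_traceRing right_mem_traceSpan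
  · exact smul_mem_traceSpan trace_right_mem_traceRing left_mem_traceSpan
  · exact smul_mem_traceSpan h_coeff one_mem_traceSpan

theorem mul_adjugate_mem_traceSpan (h_trace : N.trace ∈ traceRing A B) (hM : M ∈ traceSpan A B)
    (h_mul : M * N ∈ traceSpan A B) : M * N.adjugate ∈ traceSpan A B := by
  rw [adjugate_fin_two_eq_trace_smul_one_sub, mul_sub, mul_smul_comm, mul_one]
  exact sub_mem (smul_mem_traceSpan h_trace hM) h_mul

theorem mul_mem_traceSpan_of_generators (h_one : N ∈ traceSpan A B) (h_left : A * N ∈ traceSpan A B)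
    (h_right : B * N ∈ traceSpan A B) (h_mul : A * B * N ∈ traceSpan A B)
    (hM : M ∈ traceSpan A B) : M * N ∈ traceSpan A B := by
  suffices traceSpan A B ≤ (traceSpan A B).comap (LinearMap.mulRight (traceRing A B) N) from
    this hM
  refine Submodule.span_le.2 ?_
  rintro _ (rfl | rfl | rfl | rfl)
  exacts [by simpa using h_one, h_left, h_right, h_mul]

theorem mul_left_mem_traceSpan (hA : A.det ∈ traceRing A B) (hM : M ∈ traceSpan A B) :
    M * A ∈ traceSpan A B := by
  refine mul_mem_traceSpan_of_generators left_mem_traceSpan ?_ right_mul_left_mem_traceSpan ?_ hM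
  · rw [mul_self_fin_two]
    exact sub_mem (smul_mem_traceSpan trace_left_mem_traceRing left_mem_traceSpan)
      (smul_mem_traceSpan hA one_mem_traceSpan)
  · rw [mul_mul_same_fin_two, adjugate_fin_two_eq_trace_smul_one_sub]
    refine sub_mem (smul_mem_traceSpan trace_mul_mem_traceRing left_mem_traceSpan)
      (smul_mem_traceSpan hA (sub_mem ?_ right_mem_traceSpan))
    exact smul_mem_traceSpan trace_right_mem_traceRing one_mem_traceSpan

theorem mul_right_mem_traceSpan (hB : B.det ∈ traceRing A B) (hM : M ∈ traceSpan A B) :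
    M * B ∈ traceSpan A B := by
  refine mul_mem_traceSpan_of_generators right_mem_traceSpan left_mul_right_mem_traceSpan ?_ ?_ hM
  · rw [mul_self_fin_two]
    exact sub_mem (smul_mem_traceSpan trace_right_mem_traceRing right_mem_traceSpan)
      (smul_mem_traceSpan hB one_mem_traceSpan)
  · rw [mul_assoc, mul_self_fin_two, mul_sub, mul_smul_comm, mul_smul_comm, mul_one]
    exact sub_mem (smul_mem_traceSpan trace_right_mem_traceRing left_mul_right_mem_traceSpan)
      (smul_mem_traceSpan hB left_mem_traceSpan)

theorem trace_mem_traceRing_of_mem_traceSpan (hM : M ∈ traceSpan A B) :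
    M.trace ∈ traceRing A B := by
  induction hM using Submodule.span_induction with
  | mem M hM =>
    rcases hM with rfl | rfl | rfl | rfl
    · simp [trace_one]
    · exact trace_left_mem_traceRing
    · exact trace_right_mem_traceRing
    · exact trace_mul_mem_traceRing
  | zero => simp
  | add M N _ _ hM hN => simpa only [trace_add] using add_mem hM hN
  | smul c M _ hM =>
    rw [trace_smul, Subalgebra.smul_def, smul_eq_mul]
    exact mul_mem c.2 hM

end TraceRing

section Representation

variable {R : Type*} [CommRing R] (ρ : FreeGroup (Fin 2) →* SL(2, R))

theorem mul_hom_mem_traceSpan (w : FreeGroup (Fin 2)) {M : Matrix (Fin 2) (Fin 2) R}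
    (hM : M ∈ traceSpan (R := R) (ρ (.of 0)) (ρ (.of 1))) :
    M * (ρ w : Matrix (Fin 2) (Fin 2) R) ∈ traceSpan (R := R) (ρ (.of 0)) (ρ (.of 1)) := by
  have det_mem (g : SL(2, R)) : det (g : Matrix (Fin 2) (Fin 2) R) ∈
      traceRing (R := R) (ρ (.of 0)) (ρ (.of 1)) := by
    rw [g.det_coe]
    exact one_mem _
  induction w using FreeGroup.induction_on generalizing M with
  | C1 => simpa using hM
  | of i =>
    fin_cases i
    · exact mul_left_mem_traceSpan (det_mem _) hM
    · exact mul_right_mem_traceSpan (det_mem _) hM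
  | inv_of i mul_of_mem =>
    rw [map_inv, Matrix.SpecialLinearGroup.coe_inv]
    refine mul_adjugate_mem_traceSpan ?_ hM (mul_of_mem hM)
    fin_cases i
    · exact trace_left_mem_traceRing
    · exact trace_right_mem_traceRing
  | mul v w mul_v_mem mul_w_mem =>
    rw [map_mul, Matrix.SpecialLinearGroup.coe_mul, ← mul_assoc]
    exact mul_w_mem (mul_v_mem hM)

theorem trace_hom_mem_traceRing (w : FreeGroup (Fin 2)) :
    trace (ρ w : Matrix (Fin 2) (Fin 2) R) ∈ traceRing (R := R) (ρ (.of 0)) (ρ (.of 1)) :=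
  trace_mem_traceRing_of_mem_traceSpan
    (by simpa only [one_mul] using mul_hom_mem_traceSpan ρ w one_mem_traceSpan)

end Representation

section Universal

variable (ι n : Type*)

/-- The matrix of indeterminates `X (k, i, j)` attached to the `k`-th generator. -/
noncomputable def genericMatrix (k : ι) : Matrix n n (MvPolynomial (ι × n × n) ℤ) :=
  of fun i j => MvPolynomial.X (k, i, j)

variable [DecidableEq n] [Fintype n]

/-- The ideal generated by the relations `det = 1` for the generic matrices. -/
noncomputable def detOneIdeal : Ideal (MvPolynomial (ι × n × n) ℤ) :=
  Ideal.span (Set.range fun k => (genericMatrix ι n k).det - 1)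

/-- The coordinate ring of the scheme of representations `FreeGroup ι → SL(n)`. -/
abbrev UniversalRing : Type _ :=
  MvPolynomial (ι × n × n) ℤ ⧸ detOneIdeal ι n

theorem det_genericMatrix_mk (k : ι) :
    ((genericMatrix ι n k).map (Ideal.Quotient.mk (detOneIdeal ι n))).det = 1 := by
  rw [← RingHom.mapMatrix_apply, ← RingHom.map_det, ← map_one (Ideal.Quotient.mk _),
    Ideal.Quotient.mk_eq_mk_iff_sub_mem]
  exact Ideal.subset_span ⟨k, rfl⟩

/-- The class of the `k`-th generic matrix modulo `det = 1`. -/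
noncomputable def universalGenerator (k : ι) :
    Matrix.SpecialLinearGroup n (UniversalRing ι n) :=
  ⟨(genericMatrix ι n k).map (Ideal.Quotient.mk (detOneIdeal ι n)), det_genericMatrix_mk ι n k⟩

/-- The universal representation of a free group in `SL(n)`: every other one is obtained from it by
a change of rings. -/
noncomputable def universalRep :
    FreeGroup ι →* Matrix.SpecialLinearGroup n (UniversalRing ι n) :=
  FreeGroup.lift (universalGenerator ι n)

variable {ι n}

theorem coe_universalRep_of (k : ι) :
    (universalRep ι n (.of k) : Matrix n n (UniversalRing ι n)) =
      (genericMatrix ι n k).map (Ideal.Quotient.mk (detOneIdeal ι n)) := by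
  rw [universalRep, FreeGroup.lift_apply_of, universalGenerator]

theorem exists_map_comp_universalRep_eq {R : Type*} [CommRing R]
    (ρ : FreeGroup ι →* Matrix.SpecialLinearGroup n R) :
    ∃ φ : UniversalRing ι n →+* R,
      (Matrix.SpecialLinearGroup.map φ).comp (universalRep ι n) = ρ := by
  let entries : MvPolynomial (ι × n × n) ℤ →+* R :=
    MvPolynomial.eval₂Hom (Int.castRingHom R) fun x => ρ (.of x.1) x.2.1 x.2.2
  have map_genericMatrix (k : ι) :
      entries.mapMatrix (genericMatrix ι n k) = (ρ (.of k) : Matrix n n R) := by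
    ext i j
    simp [entries, genericMatrix]
  have detOneIdeal_le_ker : detOneIdeal ι n ≤ RingHom.ker entries := by
    refine Ideal.span_le.2 ?_
    rintro _ ⟨k, rfl⟩
    simp [RingHom.mem_ker, RingHom.map_det, map_genericMatrix]
  refine ⟨Ideal.Quotient.lift (detOneIdeal ι n) entries detOneIdeal_le_ker, ?_⟩
  ext k i j
  rw [MonoidHom.comp_apply, Matrix.SpecialLinearGroup.map_apply_coe, coe_universalRep_of]
  exact congr_fun₂ (map_genericMatrix k) i j

end Universal

theorem exists_trace_polynomial_general (w : FreeGroup (Fin 2)) :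
    ∃ P : MvPolynomial (Fin 3) ℤ,
      ∀ (R : Type*) [CommRing R] (ρ : FreeGroup (Fin 2) →* SL(2, R)),
        trace (ρ w : Matrix (Fin 2) (Fin 2) R) =
          MvPolynomial.aeval
            ![trace (ρ (.of 0) : Matrix (Fin 2) (Fin 2) R),
              trace (ρ (.of 1) : Matrix (Fin 2) (Fin 2) R),
              trace ((ρ (.of 0) * ρ (.of 1) : SL(2, R)) : Matrix (Fin 2) (Fin 2) R)] P := by
  let υ := universalRep (Fin 2) (Fin 2)
  obtain ⟨P, hP : traceEval _ _ P = _⟩ := trace_hom_mem_traceRing υ w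
  refine ⟨P, fun R _ ρ => ?_⟩
  obtain ⟨φ, rfl⟩ := exists_map_comp_universalRep_eq ρ
  calc
    _ = φ (trace (υ w : Matrix (Fin 2) (Fin 2) (UniversalRing (Fin 2) (Fin 2)))) :=
      (AddMonoidHom.map_trace φ _).symm
    _ = φ (traceEval _ _ P) := congrArg φ hP.symm
    _ = _ := map_traceEval φ P

/-- For every word `w` in the free group on two generators there is an integer
polynomial `P ∈ ℤ[X, Y, Z]`, depending only on `w`, such that for every
homomorphism `ρ : F₂ → SL(2, ℂ)` sending the generators to `A` and `B`, one has
`tr(ρ(w)) = P(tr A, tr B, tr(AB))`. -/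
theorem exists_trace_polynomial (w : FreeGroup (Fin 2)) :
    ∃ P : MvPolynomial (Fin 3) ℤ,
      ∀ (A B : SL(2, ℂ)) (ρ : FreeGroup (Fin 2) →* SL(2, ℂ)),
        ρ (FreeGroup.of 0) = A → ρ (FreeGroup.of 1) = B →
        Matrix.trace ((ρ w : SL(2, ℂ)) : Matrix (Fin 2) (Fin 2) ℂ) =
          MvPolynomial.aeval
            ![Matrix.trace (A : Matrix (Fin 2) (Fin 2) ℂ),
              Matrix.trace (B : Matrix (Fin 2) (Fin 2) ℂ),
              Matrix.trace ((A * B : SL(2, ℂ)) : Matrix (Fin 2) (Fin 2) ℂ)] P := by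
  obtain ⟨P, hP⟩ := exists_trace_polynomial_general w
  exact ⟨P, by rintro _ _ ρ rfl rfl; exact hP ℂ ρ⟩
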